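/- Let A be a complex unital Banach algebra, a ∈ A with g-Drazin inverse a^d, a^π := 1 − a·a^d, and b, c ∈ A with (bc)·a^π = 0 and a^d·(bc) = (bc)·a^d. Then M = [[a,b],[c,0]] has g-Drazin inverse in M₂(A) if and only if bc has g-Drazin inverse in A. -/

import Mathlib

open Filter Finset

/-- An element of a complex (Banach) algebra is quasinilpotent if its spectral radius is zero. -/
noncomputable def Quasinilpotent {A : Type*} [Ring A] [Algebra ℂ A] (q : A) : Prop :=
  spectralRadius ℂ q = 0

/-- `a` has a generalized Drazin inverse: some `b` with `ab = ba`, `b = bab`,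
and `a - a²b` quasinilpotent. -/
noncomputable def HasGDrazin {A : Type*} [Ring A] [Algebra ℂ A] (a : A) : Prop :=
  ∃ b : A, a * b = b * a ∧ b = b * a * b ∧ Quasinilpotent (a - a ^ 2 * b)

theorem quasinilpotent_iff_forall_isUnit {R : Type*} [Ring R] [Algebra ℂ R] {q : R} :
    Quasinilpotent q ↔ ∀ z : ℂ, z ≠ 0 → IsUnit (algebraMap ℂ R z - q) := by
  simp only [Quasinilpotent, spectralRadius, ENNReal.iSup_eq_zero, spectrum.mem_iff]
  refine forall_congr' fun z => ?_
  simp only [ENNReal.coe_eq_zero, nnnorm_eq_zero]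
  tauto

theorem Quasinilpotent.map {R S : Type*} [Ring R] [Algebra ℂ R] [Ring S] [Algebra ℂ S]
    (φ : R →ₐ[ℂ] S) {q : R} (hq : Quasinilpotent q) : Quasinilpotent (φ q) := by
  rw [quasinilpotent_iff_forall_isUnit] at hq ⊢
  intro z hz
  simpa using (hq z hz).map φ

theorem Quasinilpotent.of_map {R S : Type*} [Ring R] [Algebra ℂ R] [Ring S] [Algebra ℂ S]
    (φ : R →ₐ[ℂ] S) (hφ : ∀ x, IsUnit (φ x) → IsUnit x) {q : R}
    (hq : Quasinilpotent (φ q)) : Quasinilpotent q := by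
  rw [quasinilpotent_iff_forall_isUnit] at hq ⊢
  intro z hz
  apply hφ
  simpa using hq z hz

theorem Quasinilpotent.mul_swap {R : Type*} [Ring R] [Algebra ℂ R] {x y : R}
    (h : Quasinilpotent (x * y)) : Quasinilpotent (y * x) := by
  rw [quasinilpotent_iff_forall_isUnit] at h ⊢
  intro z hz
  have := h z hz
  rw [← spectrum.notMem_iff] at this ⊢
  intro h'
  apply this
  exact spectrum.unit_mem_mul_comm (r := Units.mk0 z hz) |>.2 h'

theorem HasGDrazin.map {R S : Type*} [Ring R] [Algebra ℂ R] [Ring S] [Algebra ℂ S]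
    (φ : R →ₐ[ℂ] S) {x : R} (hx : HasGDrazin x) : HasGDrazin (φ x) := by
  obtain ⟨d, hc, hd, hq⟩ := hx
  refine ⟨φ d, ?_, ?_, ?_⟩
  · rw [← map_mul, hc, map_mul]
  · rw [← map_mul, ← map_mul, ← hd]
  · simpa using hq.map φ

/-- **Cline's formula**, one direction. -/
theorem HasGDrazin.mul_swap {R : Type*} [Ring R] [Algebra ℂ R] {x y : R}
    (h : HasGDrazin (x * y)) : HasGDrazin (y * x) := by
  obtain ⟨d, hc, hd, hq⟩ := h
  have e1 : x * y * d * d = d := by rw [hc, ← hd]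
  have e2 : d * d * (x * y) = d := by rw [mul_assoc, ← hc, ← mul_assoc, ← hd]
  have l : y * x * (y * d * d * x) = y * d * x := by
    calc _ = y * (x * y * d * d) * x := by noncomm_ring
      _ = _ := by rw [e1]
  have r : y * d * d * x * (y * x) = y * d * x := by
    calc _ = y * (d * d * (x * y)) * x := by noncomm_ring
      _ = _ := by rw [e2]
  refine ⟨y * d * d * x, l.trans r.symm, ?_, ?_⟩
  · calc y * d * d * x = y * d * (x * y * d * d) * x := by rw [e1]
      _ = y * d * x * (y * d * d * x) := by noncomm_ring
      _ = _ := by rw [r]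
  · have : y * x - (y * x) ^ 2 * (y * d * d * x) = y * (x * (1 - y * d * x)) := by
      rw [sq, mul_assoc (y * x), l]
      noncomm_ring
    rw [this]
    apply Quasinilpotent.mul_swap
    convert hq using 1
    calc _ = x * y - x * y * (d * (x * y)) := by noncomm_ring
      _ = _ := by rw [← hc]; noncomm_ring

theorem hasGDrazin_mul_comm {R : Type*} [Ring R] [Algebra ℂ R] (x y : R) :
    HasGDrazin (x * y) ↔ HasGDrazin (y * x) :=
  ⟨HasGDrazin.mul_swap, HasGDrazin.mul_swap⟩

theorem Quasinilpotent.eventually_norm_pow_le {B : Type*} [NormedRing B] [NormedAlgebra ℂ B]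
    [CompleteSpace B] {q : B} (hq : Quasinilpotent q) {ρ : ℝ} (hρ : 0 < ρ) :
    ∀ᶠ n : ℕ in atTop, ‖q ^ n‖ ≤ ρ ^ n := by
  have h := spectrum.pow_norm_pow_one_div_tendsto_nhds_spectralRadius q
  rw [show spectralRadius ℂ q = 0 from hq] at h
  filter_upwards [h.eventually_lt_const (ENNReal.ofReal_pos.2 hρ), eventually_gt_atTop 0]
    with n hn hn0
  have h1 : ‖q ^ n‖ ^ (1 / n : ℝ) ≤ ρ := ((ENNReal.ofReal_lt_ofReal_iff hρ).1 hn).le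
  have h2 := pow_le_pow_left₀ (by positivity) h1 n
  rwa [one_div, Real.rpow_inv_natCast_pow (norm_nonneg _) hn0.ne'] at h2

theorem Quasinilpotent.eq_zero_of_forall_norm_le {B : Type*} [NormedRing B] [NormedAlgebra ℂ B]
    [CompleteSpace B] {q t : B} (hq : Quasinilpotent q) {K M : ℝ} (hK : 0 ≤ K) (hM : 0 ≤ M)
    (h : ∀ n : ℕ, 0 < n → ‖t‖ ≤ K ^ n * M * ‖q ^ n‖) : t = 0 := by
  have hlim : Tendsto (fun n : ℕ => M * (1 / 2 : ℝ) ^ n) atTop (nhds (M * 0)) :=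
    (tendsto_pow_atTop_nhds_zero_of_lt_one (by norm_num) (by norm_num)).const_mul _
  rw [mul_zero] at hlim
  refine norm_le_zero_iff.1 (ge_of_tendsto hlim ?_)
  filter_upwards [hq.eventually_norm_pow_le (ρ := 1 / (2 * (K + 1))) (by positivity),
    eventually_gt_atTop 0] with n hn hn0
  calc ‖t‖ ≤ K ^ n * M * ‖q ^ n‖ := h n hn0
    _ ≤ (K + 1) ^ n * M * (1 / (2 * (K + 1))) ^ n := by
        gcongr
        linarith
    _ = M * ((K + 1) * (1 / (2 * (K + 1)))) ^ n := by rw [mul_pow]; ring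
    _ = M * (1 / 2) ^ n := by congr 2; field_simp

/-- A generalized Drazin inverse of `m` commutes with everything that commutes with `m`. -/
theorem gDrazin_commute_of_commute {B : Type*} [NormedRing B] [NormedAlgebra ℂ B]
    [CompleteSpace B] {m d s : B} (hc : m * d = d * m) (hd : d = d * m * d)
    (hq : Quasinilpotent (m - m ^ 2 * d)) (hs : s * m = m * s) : s * d = d * s := by
  have hc' : Commute m d := hc
  have hs' : Commute s m := hs
  have hidem : IsIdempotentElem (m * d) := by
    rw [IsIdempotentElem, mul_assoc, ← mul_assoc d, ← hd]
  have hpow (n : ℕ) (hn : 0 < n) : m ^ n * d ^ n = m * d := by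
    rw [← hc'.mul_pow, hidem.pow_eq hn.ne']
  have hqpow (n : ℕ) (hn : 0 < n) : m ^ n * (1 - m * d) = (m - m ^ 2 * d) ^ n := by
    have e : m - m ^ 2 * d = m * (1 - m * d) := by noncomm_ring
    have hcm : Commute m (1 - m * d) :=
      (Commute.one_right m).sub_right ((Commute.refl m).mul_right hc')
    rw [e, hcm.mul_pow, hidem.one_sub.pow_eq hn.ne']
  have hcomm1 (n : ℕ) : Commute (m ^ n) (1 - m * d) :=
    ((Commute.one_right m).sub_right ((Commute.refl m).mul_right hc')).pow_left n
  have t1 : m * d * s * (1 - m * d) = 0 := by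
    refine hq.eq_zero_of_forall_norm_le (K := ‖d‖) (M := ‖s‖) (norm_nonneg d)
      (norm_nonneg s) fun n hn => ?_
    have : m * d * s * (1 - m * d) = d ^ n * s * (m - m ^ 2 * d) ^ n := by
      rw [← hqpow n hn, ← hpow n hn, (hc'.pow_pow n n).eq, mul_assoc (d ^ n),
        ← (hs'.pow_right n).eq]
      noncomm_ring
    rw [this]
    refine (norm_mul_le _ _).trans ?_
    gcongr
    refine (norm_mul_le _ _).trans ?_
    gcongr
    exact norm_pow_le' d hn
  have t2 : (1 - m * d) * s * (m * d) = 0 := by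
    refine hq.eq_zero_of_forall_norm_le (K := ‖d‖) (M := ‖s‖) (norm_nonneg d)
      (norm_nonneg s) fun n hn => ?_
    have : (1 - m * d) * s * (m * d) = (m - m ^ 2 * d) ^ n * (s * d ^ n) := by
      nth_rw 2 [← hpow n hn]
      rw [← hqpow n hn, (hcomm1 n).eq]
      simp only [mul_assoc]
      rw [← mul_assoc s, (hs'.pow_right n).eq]
      simp only [mul_assoc]
    rw [this]
    refine (norm_mul_le _ _).trans ?_
    rw [mul_comm]
    gcongr
    refine (norm_mul_le _ _).trans ?_
    rw [mul_comm]
    gcongr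
    exact norm_pow_le' d hn
  have t3 : s * (m * d) = m * d * s := by
    rw [mul_sub, mul_one, sub_eq_zero] at t1
    rw [sub_mul, one_mul, sub_mul, sub_eq_zero] at t2
    exact t2.trans t1.symm
  calc s * d = s * (m * d) * d := by rw [hc, mul_assoc, ← hd]
    _ = d * (s * m) * d := by rw [t3, hs, hc]; noncomm_ring
    _ = d * (s * (m * d)) := by noncomm_ring
    _ = d * s := by rw [t3, ← mul_assoc, ← mul_assoc, ← hd]

section Commutative

variable {C : Type*} [NormedCommRing C] [NormedAlgebra ℂ C] [CompleteSpace C]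

theorem isUnit_iff_forall_character_ne_zero {x : C} :
    IsUnit x ↔ ∀ χ : WeakDual.characterSpace ℂ C, χ x ≠ 0 := by
  refine ⟨fun h χ => (h.map χ).ne_zero, fun h => ?_⟩
  by_contra hx
  obtain ⟨χ, hχ⟩ := WeakDual.CharacterSpace.exists_apply_eq_zero hx
  exact h χ hχ

theorem quasinilpotent_iff_forall_character_eq_zero {q : C} :
    Quasinilpotent q ↔ ∀ χ : WeakDual.characterSpace ℂ C, χ q = 0 := by
  simp only [quasinilpotent_iff_forall_isUnit, isUnit_iff_forall_character_ne_zero, map_sub,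
    AlgHomClass.commutes, Algebra.algebraMap_self, RingHom.id_apply, sub_ne_zero]
  refine ⟨fun h χ => ?_, fun h z hz χ => by rwa [h χ]⟩
  by_contra hχ
  exact h _ hχ χ rfl

theorem Complex.eq_zero_of_forall_quadratic_ne_zero {t d : ℂ}
    (h : ∀ z : ℂ, z ≠ 0 → z ^ 2 - t * z + d ≠ 0) : t = 0 ∧ d = 0 := by
  have hd : d = 0 := by
    obtain ⟨s, hs⟩ := IsAlgClosed.exists_eq_mul_self (t ^ 2 - 4 * d)
    by_contra hd
    refine h ((t + s) / 2) (fun h0 => hd ?_) ?_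
    · have : s = -t := by linear_combination 2 * h0
      rw [this] at hs
      linear_combination -hs / 4
    · linear_combination -hs / 4
  refine ⟨?_, hd⟩
  by_contra ht
  exact h t ht (by rw [hd]; ring)

theorem quasinilpotent_matrix_iff {Q : Matrix (Fin 2) (Fin 2) C} :
    Quasinilpotent Q ↔
      ∀ χ : WeakDual.characterSpace ℂ C, χ Q.trace = 0 ∧ χ Q.det = 0 := by
  have key (z : ℂ) (χ : WeakDual.characterSpace ℂ C) :
      χ (algebraMap ℂ (Matrix (Fin 2) (Fin 2) C) z - Q).det =
        z ^ 2 - χ Q.trace * z + χ Q.det := by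
    have hz : χ (algebraMap ℂ C z) = z := AlgHomClass.commutes χ z
    simp only [Matrix.det_fin_two, Matrix.trace_fin_two, Matrix.sub_apply,
      Matrix.algebraMap_matrix_apply, map_sub, map_mul, map_add]
    simp only [hz, if_true, zero_ne_one, one_ne_zero, if_false, map_zero]
    ring
  simp only [quasinilpotent_iff_forall_isUnit, Matrix.isUnit_iff_isUnit_det,
    isUnit_iff_forall_character_ne_zero, key]
  refine ⟨fun h χ => Complex.eq_zero_of_forall_quadratic_ne_zero fun z hz => h z hz χ,
    fun h z hz χ => ?_⟩
  rw [(h χ).1, (h χ).2]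
  simpa using hz

theorem Matrix.mul_self_eq_zero_of_trace_eq_zero_of_det_eq_zero {R : Type*} [CommRing R]
    {Q : Matrix (Fin 2) (Fin 2) R} (ht : Q.trace = 0) (hd : Q.det = 0) : Q * Q = 0 := by
  rw [Matrix.trace_fin_two] at ht
  rw [Matrix.det_fin_two] at hd
  ext i j
  fin_cases i <;> fin_cases j <;> simp [Matrix.mul_apply, Fin.sum_univ_two]
  · linear_combination Q 0 0 * ht - hd
  · linear_combination Q 0 1 * ht
  · linear_combination Q 1 0 * ht
  · linear_combination Q 1 1 * ht - hd

theorem HasGDrazin.det {N : Matrix (Fin 2) (Fin 2) C} (h : HasGDrazin N) : HasGDrazin N.det := by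
  obtain ⟨D, hc, hD, hq⟩ := h
  refine ⟨D.det, mul_comm _ _, ?_, ?_⟩
  · rw [← Matrix.det_mul, ← Matrix.det_mul, ← hD]
  rw [quasinilpotent_iff_forall_character_eq_zero]
  intro χ
  let φ : Matrix (Fin 2) (Fin 2) C →+* Matrix (Fin 2) (Fin 2) ℂ := (χ : C →+* ℂ).mapMatrix
  have hdet (X : Matrix (Fin 2) (Fin 2) C) : (φ X).det = χ X.det :=
    ((χ : C →+* ℂ).map_det X).symm
  have htr (X : Matrix (Fin 2) (Fin 2) C) : (φ X).trace = χ X.trace := by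
    simp [φ, Matrix.trace_fin_two]
  have hQ : φ (N - N ^ 2 * D) * φ (N - N ^ 2 * D) = 0 := by
    obtain ⟨h1, h2⟩ := quasinilpotent_matrix_iff.1 hq χ
    exact Matrix.mul_self_eq_zero_of_trace_eq_zero_of_det_eq_zero ((htr _).trans h1)
      ((hdet _).trans h2)
  by_cases hw : χ N.det = 0
  · simp [hw]
  have hu : IsUnit (φ N) := by
    rw [Matrix.isUnit_iff_isUnit_det, hdet]
    exact isUnit_iff_ne_zero.2 hw
  have hidem : (1 - N * D) * (1 - N * D) = 1 - N * D := by
    have : N * D * (N * D) = N * D := by rw [mul_assoc, ← mul_assoc D, ← hD]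
    rw [mul_sub, sub_mul (1 : Matrix (Fin 2) (Fin 2) C) (N * D) (N * D), this]
    simp
  have hND : N * (N * D) = N * D * N := by rw [mul_assoc, ← hc]
  have hfac : (N - N ^ 2 * D) * (N - N ^ 2 * D) = N * N * (1 - N * D) := by
    calc _ = N * ((1 - N * D) * N) * (1 - N * D) := by noncomm_ring
      _ = N * (N * (1 - N * D)) * (1 - N * D) := by
        rw [sub_mul 1 (N * D) N, mul_sub N 1 (N * D), one_mul, mul_one, hND]
      _ = N * N * ((1 - N * D) * (1 - N * D)) := by noncomm_ring
      _ = _ := by rw [hidem]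
  have h1 : φ N * φ N * φ (1 - N * D) = 0 := by
    rw [← map_mul, ← map_mul, ← hfac, map_mul, hQ]
  have h2 : φ (N * D) = 1 := by
    have := (hu.mul hu).mul_right_eq_zero.1 h1
    rw [map_sub, map_one, sub_eq_zero] at this
    exact this.symm
  have h3 : χ N.det * χ D.det = 1 := by
    rw [← map_mul, ← Matrix.det_mul, ← hdet, h2, Matrix.det_one]
  rw [map_sub, map_mul, map_pow, sq, mul_assoc, h3, mul_one, sub_self]

theorem catalan_le_four_pow (n : ℕ) : catalan n ≤ 4 ^ n := by
  rw [catalan_eq_centralBinom_div]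
  exact (Nat.div_le_self _ _).trans (Nat.centralBinom_le_four_pow n)

/-- The generating function of the Catalan numbers converges at every quasinilpotent element. -/
theorem Quasinilpotent.exists_eq_one_add_mul_sq {z : C} (hz : Quasinilpotent z) :
    ∃ S : C, S = 1 + z * S ^ 2 := by
  have hs : Summable fun n : ℕ => ‖(catalan n : C) * z ^ n‖ := by
    have hg : Summable fun n : ℕ => ‖(1 : C)‖ * (1 / 2 : ℝ) ^ n :=
      (summable_geometric_of_lt_one (by norm_num) (by norm_num)).mul_left _
    refine Summable.of_norm_bounded_eventually_nat hg ?_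
    filter_upwards [hz.eventually_norm_pow_le (ρ := 1 / 8) (by norm_num)] with n hn
    rw [norm_norm]
    calc ‖(catalan n : C) * z ^ n‖ ≤ ‖(catalan n : C)‖ * ‖z ^ n‖ := norm_mul_le _ _
      _ ≤ (4 ^ n * ‖(1 : C)‖) * (1 / 8) ^ n := by
        gcongr
        calc ‖(catalan n : C)‖ ≤ catalan n * ‖(1 : C)‖ := Nat.norm_cast_le _
          _ ≤ 4 ^ n * ‖(1 : C)‖ := by
            gcongr
            exact_mod_cast catalan_le_four_pow n
      _ = ‖(1 : C)‖ * (4 * (1 / 8)) ^ n := by rw [mul_pow]; ring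
      _ = ‖(1 : C)‖ * (1 / 2) ^ n := by norm_num
  refine ⟨∑' n : ℕ, (catalan n : C) * z ^ n, ?_⟩
  rw [sq, tsum_mul_tsum_eq_tsum_sum_antidiagonal_of_summable_norm hs hs,
    ← (summable_norm_sum_mul_antidiagonal_of_summable_norm hs hs).of_norm.tsum_mul_left z,
    hs.of_norm.tsum_eq_zero_add]
  congr 1
  · simp
  · refine tsum_congr fun n => ?_
    rw [catalan_succ', Nat.cast_sum, sum_mul, mul_sum]
    refine sum_congr rfl fun p hp => ?_
    rw [← mem_antidiagonal.1 hp]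
    push_cast
    ring

/-- The quadratic `X ^ 2 - a * X - w` has a quasinilpotent root when `w` is quasinilpotent and
is supported where `a` has the inverse `y`. -/
theorem Quasinilpotent.exists_quasinilpotent_root {a y w : C} (hw : Quasinilpotent w)
    (hy : w * (1 - a * y) = 0) : ∃ r : C, Quasinilpotent r ∧ r ^ 2 - a * r = w := by
  have hz : Quasinilpotent (-(y ^ 2 * w)) := by
    rw [quasinilpotent_iff_forall_character_eq_zero] at hw ⊢
    intro χ
    simp [hw χ]
  obtain ⟨S, hS⟩ := hz.exists_eq_one_add_mul_sq
  refine ⟨-(y * w * S), ?_, ?_⟩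
  · rw [quasinilpotent_iff_forall_character_eq_zero] at hw ⊢
    intro χ
    simp [hw χ]
  · linear_combination w * hS - S * hy

theorem HasGDrazin.companion {a y w : C} (hy : y = y * a * y)
    (hq : Quasinilpotent (a - a ^ 2 * y)) (hw : w * (1 - a * y) = 0) (h : HasGDrazin w) :
    HasGDrazin (!![a, 1; w, 0] : Matrix (Fin 2) (Fin 2) C) := by
  obtain ⟨v, -, hv, hwq⟩ := h
  obtain ⟨r, hr, hrw⟩ := hwq.exists_quasinilpotent_root (a := a) (y := y)
    (by linear_combination (1 - w * v) * hw)
  rw [quasinilpotent_iff_forall_character_eq_zero] at hq hwq hr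
  obtain ⟨e, he⟩ : ∃ e, e = a * y * (1 - w * v) := ⟨_, rfl⟩
  have hee : e * e = e := by grind
  have hew : e * (w * v) = 0 := by grind
  have hu : IsUnit (e * (a - r) * (a - 2 * r) + (1 - e)) := by
    rw [isUnit_iff_forall_character_ne_zero]
    intro χ
    have h1 : χ e * χ e = χ e := by rw [← map_mul, hee]
    have h2 : χ e = χ a * χ y * (1 - χ w * χ v) := by rw [he]; simp
    simp only [map_add, map_sub, map_mul, map_one, hr χ]
    rcases IsIdempotentElem.iff_eq_zero_or_one.1 h1 with h0 | h0
    · simp [h0]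
    · have : χ a ≠ 0 := by
        intro h'
        simp [h', h0] at h2
      simp [h0, this]
  obtain ⟨u, hu⟩ := hu.exists_right_inv
  obtain ⟨h, hh⟩ : ∃ h, h = e * u := ⟨_, rfl⟩
  have heh : e * h = h := by rw [hh, ← mul_assoc, hee]
  have hinv : h * ((a - r) * (a - 2 * r)) = e := by
    linear_combination ((a - r) * (a - 2 * r)) * hh + e * hu
      + u * (1 - (a - r) * (a - 2 * r)) * hee
  have hwv : h * (w * v) = 0 := by linear_combination h * hew - w * v * heh
  have hrh : h * (r ^ 2 - a * r) = h * w := by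
    linear_combination h * hrw - w * hwv
  refine ⟨!![(a - r) * h, v + h; w * (v + h), -(a * v) - r * h], ?_, ?_, ?_⟩
  · ext i j
    fin_cases i <;> fin_cases j <;> simp [Matrix.mul_apply, Fin.sum_univ_two] <;> ring
  · ext i j
    fin_cases i <;> fin_cases j <;> simp [Matrix.mul_apply, Fin.sum_univ_two]
    · grind
    · grind
    · grind
    · grind
  · rw [quasinilpotent_matrix_iff]
    intro χ
    have k1 := hq χ
    have k2 := congrArg χ hw
    have k3 := hwq χ
    have k4 := hr χ
    have k5 := congrArg χ hinv
    have k6 := congrArg χ hwv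
    have k7 := congrArg χ he
    have k8 := congrArg χ hv
    simp only [map_sub, map_mul, map_pow, map_one, map_zero, map_ofNat, k4] at k1 k2 k3 k5 k6 k7 k8
    simp [Matrix.trace_fin_two, Matrix.det_fin_two, sq, k4]
    by_cases hW : χ w = 0
    · simp only [hW] at *
      constructor <;> grind
    · constructor <;> grind

theorem hasGDrazin_companion_iff {a y w : C} (hy : y = y * a * y)
    (hq : Quasinilpotent (a - a ^ 2 * y)) (hw : w * (1 - a * y) = 0) :
    HasGDrazin (!![a, 1; w, 0] : Matrix (Fin 2) (Fin 2) C) ↔ HasGDrazin w := by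
  refine ⟨fun h => ?_, HasGDrazin.companion hy hq hw⟩
  obtain ⟨d, hc, hd, hdq⟩ := h.det
  rw [show (!![a, 1; w, 0] : Matrix (Fin 2) (Fin 2) C).det = -w by
    simp [Matrix.det_fin_two]] at hc hd hdq
  refine ⟨-d, mul_comm _ _, by linear_combination -hd, ?_⟩
  rw [quasinilpotent_iff_forall_character_eq_zero] at hdq ⊢
  intro χ
  have := hdq χ
  simp only [map_sub, map_mul, map_neg, map_pow] at this ⊢
  linear_combination -this

end Commutative

theorem isUnit_of_isUnit_map_of_range_eq_centralizer {R B : Type*} [Ring R] [Algebra ℂ R]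
    [Ring B] [Algebra ℂ B] (φ : R →ₐ[ℂ] B) (hinj : Function.Injective φ) (T : Set B)
    (hT : ∀ x, x ∈ φ.range ↔ ∀ t ∈ T, t * x = x * t) {y : R} (hy : IsUnit (φ y)) :
    IsUnit y := by
  obtain ⟨u, hu⟩ := hy
  obtain ⟨v, hv⟩ : (↑u⁻¹ : B) ∈ φ.range := by
    refine (hT _).2 fun t ht => ?_
    have h : Commute t (u : B) := by rw [hu]; exact (hT _).1 ⟨y, rfl⟩ t ht
    exact h.units_inv_right.eq
  replace hv : φ v = ↑u⁻¹ := hv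
  refine isUnit_iff_exists.2 ⟨v, hinj ?_, hinj ?_⟩
  · rw [map_mul, map_one, hv, ← hu, Units.mul_inv]
  · rw [map_mul, map_one, hv, ← hu, Units.inv_mul]

/-- An embedding whose range is a centralizer preserves and reflects generalized Drazin
invertibility. -/
theorem hasGDrazin_map_iff_of_range_eq_centralizer {R B : Type*} [Ring R] [Algebra ℂ R]
    [NormedRing B] [NormedAlgebra ℂ B] [CompleteSpace B] (φ : R →ₐ[ℂ] B)
    (hinj : Function.Injective φ) (T : Set B) (hT : ∀ x, x ∈ φ.range ↔ ∀ t ∈ T, t * x = x * t)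
    {x : R} : HasGDrazin (φ x) ↔ HasGDrazin x := by
  refine ⟨fun ⟨d, hc, hd, hq⟩ => ?_, HasGDrazin.map φ⟩
  obtain ⟨d, rfl⟩ : d ∈ φ.range :=
    (hT d).2 fun t ht => gDrazin_commute_of_commute hc hd hq ((hT _).1 ⟨x, rfl⟩ t ht)
  replace hc : φ x * φ d = φ d * φ x := hc
  replace hd : φ d = φ d * φ x * φ d := hd
  refine ⟨d, hinj (by simpa using hc), hinj (by simpa using hd),
    Quasinilpotent.of_map φ
      (fun _ => isUnit_of_isUnit_map_of_range_eq_centralizer φ hinj T hT) ?_⟩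
  rw [map_sub, map_mul, map_pow]
  exact hq

theorem hasGDrazin_mapMatrix_iff_of_range_eq_centralizer {R B : Type*} [Ring R] [Algebra ℂ R]
    [NormedRing B] [NormedAlgebra ℂ B] [CompleteSpace B] (φ : R →ₐ[ℂ] B)
    (hinj : Function.Injective φ) (T : Set B) (hT : ∀ x, x ∈ φ.range ↔ ∀ t ∈ T, t * x = x * t)
    {X : Matrix (Fin 2) (Fin 2) R} : HasGDrazin (φ.mapMatrix X) ↔ HasGDrazin X := by
  let := Matrix.linftyOpNormedRing (n := Fin 2) (α := B)
  let := Matrix.linftyOpNormedAlgebra (n := Fin 2) (R := ℂ) (α := B)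
  have hcomplete : CompleteSpace (Matrix (Fin 2) (Fin 2) B) := inferInstance
  have : @CompleteSpace (Matrix (Fin 2) (Fin 2) B) PseudoMetricSpace.toUniformSpace := hcomplete
  refine hasGDrazin_map_iff_of_range_eq_centralizer (φ.mapMatrix (m := Fin 2))
    (Matrix.map_injective hinj) (Set.image (Matrix.scalar (Fin 2)) T) fun Y => ?_
  rw [Set.forall_mem_image]
  have key (t : B) : Matrix.scalar (Fin 2) t * Y = Y * Matrix.scalar (Fin 2) t ↔
      ∀ i j, t * Y i j = Y i j * t := by
    simp [← Matrix.ext_iff, Matrix.scalar_apply]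
  simp only [key]
  constructor
  · rintro ⟨Z, rfl⟩ t ht i j
    exact (hT _).1 ⟨Z i j, rfl⟩ t ht
  · intro h
    choose Z hZ using fun i j => (hT (Y i j)).2 fun t ht => h ht i j
    exact ⟨Matrix.of Z, Matrix.ext hZ⟩

/-- Reduction of the companion matrix criterion to the double commutant of `{a, w, y}`. -/
theorem hasGDrazin_companion_iff_of_commute {A : Type*} [NormedRing A] [NormedAlgebra ℂ A]
    [CompleteSpace A] {a y w : A} (hay : a * y = y * a) (hy : y = y * a * y)
    (hq : Quasinilpotent (a - a ^ 2 * y)) (hw : w * (1 - a * y) = 0) (haw : a * w = w * a)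
    (hyw : y * w = w * y) :
    HasGDrazin (!![a, 1; w, 0] : Matrix (Fin 2) (Fin 2) A) ↔ HasGDrazin w := by
  let T : Set A := Set.centralizer {a, w, y}
  let C : Subalgebra ℂ A := Subalgebra.centralizer ℂ T
  have hsub : ({a, w, y} : Set A) ⊆ T := by
    rintro s (rfl | rfl | rfl) t (rfl | rfl | rfl) <;> first | rfl | assumption | (symm; assumption)
  have hmem {x : A} (hx : x ∈ ({a, w, y} : Set A)) : x ∈ C := fun t ht => (ht x hx).symm
  have hcomm (s t : C) : s * t = t * s :=
    Subtype.ext (t.2 s fun x hx => s.2 x (hsub hx))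
  let : NormedCommRing C := { (inferInstance : NormedRing C) with mul_comm := hcomm }
  have : CompleteSpace C := (Set.isClosed_centralizer T).completeSpace_coe
  have hinj : Function.Injective C.val := Subtype.val_injective
  have hT (x : A) : x ∈ C.val.range ↔ ∀ t ∈ T, t * x = x * t := by
    rw [Subalgebra.range_val]
    rfl
  let aC : C := ⟨a, hmem (by simp)⟩
  let wC : C := ⟨w, hmem (by simp)⟩
  let yC : C := ⟨y, hmem (by simp)⟩
  have hN : C.val.mapMatrix (!![aC, 1; wC, 0] : Matrix (Fin 2) (Fin 2) C) = !![a, 1; w, 0] := by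
    ext i j
    fin_cases i <;> fin_cases j <;> rfl
  rw [← hN, hasGDrazin_mapMatrix_iff_of_range_eq_centralizer C.val hinj T hT]
  change _ ↔ HasGDrazin (C.val wC)
  rw [hasGDrazin_map_iff_of_range_eq_centralizer C.val hinj T hT]
  have hq' : Quasinilpotent (aC - aC ^ 2 * yC) :=
    Quasinilpotent.of_map C.val
      (fun _ => isUnit_of_isUnit_map_of_range_eq_centralizer C.val hinj T hT) hq
  exact hasGDrazin_companion_iff (Subtype.ext hy) hq' (Subtype.ext hw)

theorem stmt16 {A : Type*} [NormedRing A] [NormedAlgebra ℂ A] [CompleteSpace A]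
    (a b c ad : A) (h1 : a * ad = ad * a) (h2 : ad = ad * a * ad)
    (h3 : Quasinilpotent (a - a ^ 2 * ad))
    (hbc : (b * c) * (1 - a * ad) = 0) (hcm : ad * (b * c) = (b * c) * ad) :
    HasGDrazin (!![a, b; c, 0] : Matrix (Fin 2) (Fin 2) A) ↔ HasGDrazin (b * c) := by
  have hw : b * c * (a * ad) = b * c := by
    rw [mul_sub, mul_one, sub_eq_zero] at hbc
    exact hbc.symm
  have hM : (!![a, b; c, 0] : Matrix (Fin 2) (Fin 2) A) = !![a, 1; c, 0] * !![1, 0; 0, b] := by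
    simp
  have hN : (!![a, 1; b * c, 0] : Matrix (Fin 2) (Fin 2) A) =
      !![1, 0; 0, b] * !![a, 1; c, 0] := by
    simp
  have haw : a * (b * c) = b * c * a := by
    have e1 : a * (b * c) = a * ad * (b * c) * a := by
      calc _ = a * (b * c * (ad * a)) := by rw [← h1, hw]
        _ = a * (b * c * ad * a) := by noncomm_ring
        _ = _ := by rw [← hcm]; noncomm_ring
    have e2 : a * ad * (b * c) = b * c := by
      calc a * ad * (b * c) = a * ad * (b * c * (ad * a)) := by rw [← h1, hw]
        _ = a * ad * (b * c * ad * a) := by noncomm_ring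
        _ = (ad * a * ad) * (b * c) * a := by rw [← hcm, h1]; noncomm_ring
        _ = b * c * (ad * a) := by rw [← h2, hcm]; noncomm_ring
        _ = b * c := by rw [← h1, hw]
    rw [e1, e2]
  rw [hM, hasGDrazin_mul_comm, ← hN]
  exact hasGDrazin_companion_iff_of_commute h1 h2 h3 hbc haw hcm
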